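/- Let Λ ⊂ ℂ be a lattice and let p and q be integers greater than 1 that are relatively prime. Let d_σ, d_τ : ℂ → ℤ be discretely supported, Λ-periodic functions with d_σ(0) = d_τ(0) = 0, satisfying the cocycle relation d_τ(pz) − d_τ(z) = d_σ(qz) − d_σ(z) for all z ∈ ℂ. Then there exists a discretely supported, Λ-periodic function e : ℂ → ℤ such that d_σ(z) = e(pz) − e(z) and d_τ(z) = e(qz) − e(z) for all z ∈ ℂ. -/

import Mathlib

/-!
The divisor `e` is forced by its values along backward orbits: if `e` has finite support modulo
`Λ` and `dσ z = e (p z) - e z`, then `e z` is the sum of `dσ` over the points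
`z / p, z / p ^ 2, …` for every `z ≠ 0`. This sum is taken as the definition (`backSum`); it is
finite because `dσ` vanishes near `0`. It satisfies the `p`-equation and has discrete support by
construction. The corresponding sum of `dτ` over `z / q ^ m` satisfies the `q`-equation. What
remains is that the two sums agree and that they are `Λ`-periodic away from `0`; both follow from
`backSum_eq`: the `p`-sum at `z` equals the `q`-sum at `z + l` for every `l ∈ Λ` as long as `z`
and `z + l` are nonzero. The value `e 0` is then set to the common value of `e` on `Λ \ {0}`.

To prove `backSum_eq`, coprimality gives a double family `u n m`, unique modulo `Λ`, with
`p * u (n + 1) m ≡ u n m`, `q * u n (m + 1) ≡ u n m`, `u n 0 ≡ z / p ^ n` and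
`u 0 m ≡ (z + l) / q ^ m` (`IsBranchPoint`). The cocycle relation at the points `u n m` is a
discrete curl-free condition, so the sum of `dσ` along the bottom edge of a rectangle minus the
sum of `dτ` along its left edge is the analogous difference for the two far edges (`green`). Both
far edges contribute zero once the rectangle is large (`eventually_avoid`): on the upper edge, a
support point `s` would satisfy `p ^ n * s ≡ (z + l) / q ^ m` modulo `Λ`. If `s` is torsion
modulo `Λ`, a fixed multiple of the small nonzero number `(z + l) / q ^ m` lies in `Λ`,
which fails for large `m`; if `s` is not torsion, `q ^ m * p ^ n * s ≡ z + l` determines `m`.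
-/

open Filter Function

/-- `Λ` is a lattice in `ℂ`: the set `ℤω₁ + ℤω₂` for two complex numbers `ω₁, ω₂`
which are linearly independent over `ℝ`. -/
def IsComplexLattice (Λ : Set ℂ) : Prop :=
  ∃ ω₁ ω₂ : ℂ, LinearIndependent ℝ ![ω₁, ω₂] ∧
    Λ = {z : ℂ | ∃ m n : ℤ, z = (m : ℂ) * ω₁ + (n : ℂ) * ω₂}

/-- `d` is discretely supported: its support has no accumulation points in `ℂ`. -/
def DiscretelySupported (d : ℂ → ℤ) : Prop :=
  ∀ z : ℂ, ¬ AccPt z (𝓟 (Function.support d))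

/-- `d` is `Λ`-periodic. -/
def IsPeriodic (Λ : Set ℂ) (d : ℂ → ℤ) : Prop :=
  ∀ z : ℂ, ∀ l ∈ Λ, d (z + l) = d z

/-! ### Sums over backward orbits -/

/-- The sum of `d` over the strict backward orbit `z / p, z / p ^ 2, …` of `z`. As a `finsum` it
is meaningful when `d` vanishes near `0`. -/
noncomputable def backSum (d : ℂ → ℤ) (p : ℤ) (z : ℂ) : ℤ :=
  ∑ᶠ n : ℕ, d (z / (p : ℂ) ^ (n + 1))

theorem discretelySupported_iff (d : ℂ → ℤ) :
    DiscretelySupported d ↔ ∀ z, ∀ᶠ w in nhdsWithin z {z}ᶜ, d w = 0 := by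
  unfold DiscretelySupported
  simp only [accPt_iff_frequently_nhdsNE, Filter.not_frequently, Function.mem_support, not_not]

theorem exists_ball_eq_zero {d : ℂ → ℤ} (hd : DiscretelySupported d) (h0 : d 0 = 0) :
    ∃ δ > 0, ∀ w : ℂ, ‖w‖ < δ → d w = 0 := by
  have h := (discretelySupported_iff d).1 hd 0
  rw [eventually_nhdsWithin_iff, Metric.eventually_nhds_iff] at h
  obtain ⟨δ, hδ, h⟩ := h
  refine ⟨δ, hδ, fun w hw => ?_⟩
  by_cases hw0 : w = 0
  · rw [hw0, h0]
  · exact h (by simpa using hw) hw0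

theorem tendsto_div_pow {p : ℤ} (hp : 1 < p) (R : ℝ) :
    Filter.Tendsto (fun n : ℕ => R / (p : ℝ) ^ n) Filter.atTop (nhds 0) := by
  have : (1 : ℝ) < p := by exact_mod_cast hp
  exact (tendsto_pow_atTop_atTop_of_one_lt this).const_div_atTop R

theorem norm_div_intCast_pow {p : ℤ} (hp : 1 < p) (z : ℂ) (n : ℕ) :
    ‖z / (p : ℂ) ^ n‖ = ‖z‖ / (p : ℝ) ^ n := by
  have : (0 : ℝ) < p := by exact_mod_cast (by omega : 0 < p)
  rw [norm_div, norm_pow, Complex.norm_intCast, abs_of_pos this]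

theorem exists_backSum_trunc {d : ℂ → ℤ} {δ : ℝ} (hδ : 0 < δ) (h : ∀ w : ℂ, ‖w‖ < δ → d w = 0)
    {p : ℤ} (hp : 1 < p) (R : ℝ) :
    ∃ N : ℕ, ∀ z : ℂ, ‖z‖ ≤ R → ∀ n ≥ N, d (z / (p : ℂ) ^ n) = 0 := by
  obtain ⟨N, hN⟩ := Filter.eventually_atTop.1 ((tendsto_div_pow hp R).eventually_lt_const hδ)
  refine ⟨N, fun z hz n hn => h _ ?_⟩
  rw [norm_div_intCast_pow hp]
  have : (0 : ℝ) < p := by exact_mod_cast (by omega : 0 < p)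
  exact lt_of_le_of_lt (by gcongr) (hN n hn)

theorem backSum_eq_sum {d : ℂ → ℤ} {p : ℤ} {z : ℂ} {N : ℕ}
    (h : ∀ n ≥ N, d (z / (p : ℂ) ^ n) = 0) :
    backSum d p z = ∑ n ∈ Finset.range N, d (z / (p : ℂ) ^ (n + 1)) := by
  refine finsum_eq_sum_of_support_subset _ fun n hn => ?_
  by_contra hnN
  refine hn (h (n + 1) ?_)
  simp at hnN
  omega

theorem backSum_mul {d : ℂ → ℤ} (hd : DiscretelySupported d) (h0 : d 0 = 0) {p : ℤ} (hp : 1 < p)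
    (z : ℂ) : backSum d p ((p : ℂ) * z) = backSum d p z + d z := by
  obtain ⟨δ, hδ, h⟩ := exists_ball_eq_zero hd h0
  obtain ⟨N, hN⟩ := exists_backSum_trunc hδ h hp ‖z‖
  have hp0 : (p : ℂ) ≠ 0 := by exact_mod_cast (by omega : p ≠ 0)
  have key : ∀ n : ℕ, (p : ℂ) * z / (p : ℂ) ^ (n + 1) = z / (p : ℂ) ^ n := fun n => by
    rw [pow_succ']; field_simp
  rw [backSum_eq_sum (hN z le_rfl), backSum_eq_sum (N := N + 1), Finset.sum_range_succ']
  · simp [key, mul_div_cancel_left₀ _ hp0]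
  · rintro (_ | n) hn
    · omega
    · rw [key]; exact hN z le_rfl n (by omega)

theorem backSum_discrete {d : ℂ → ℤ} (hd : DiscretelySupported d) (h0 : d 0 = 0) {p : ℤ}
    (hp : 1 < p) : DiscretelySupported (backSum d p) := by
  obtain ⟨δ, hδ, h⟩ := exists_ball_eq_zero hd h0
  have hp0 : (p : ℂ) ≠ 0 := by exact_mod_cast (by omega : p ≠ 0)
  rw [discretelySupported_iff] at hd ⊢
  intro z
  obtain ⟨N, hN⟩ := exists_backSum_trunc hδ h hp (‖z‖ + 1)
  have hball : ∀ᶠ w in nhdsWithin z {z}ᶜ, ‖w‖ ≤ ‖z‖ + 1 := by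
    refine nhdsWithin_le_nhds ?_
    filter_upwards [continuous_norm.continuousAt.eventually_lt_const
      (lt_add_one ‖z‖)] with w hw using hw.le
  have hall : ∀ᶠ w in nhdsWithin z {z}ᶜ, ∀ n ∈ Finset.range N, d (w / (p : ℂ) ^ (n + 1)) = 0 := by
    rw [Filter.eventually_all_finset]
    intro n _
    have hinj : Function.Injective fun w : ℂ => w / (p : ℂ) ^ (n + 1) :=
      fun _ _ h => (div_left_inj' (pow_ne_zero _ hp0)).1 h
    have hc : ContinuousAt (fun w : ℂ => w / (p : ℂ) ^ (n + 1)) z := by fun_prop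
    have ht : Filter.Tendsto (fun w : ℂ => w / (p : ℂ) ^ (n + 1)) (nhdsWithin z {z}ᶜ)
        (nhdsWithin (z / (p : ℂ) ^ (n + 1)) {z / (p : ℂ) ^ (n + 1)}ᶜ) :=
      tendsto_nhdsWithin_iff.2 ⟨hc.tendsto.mono_left nhdsWithin_le_nhds,
        eventually_nhdsWithin_of_forall fun w hw hw' => hw (hinj hw')⟩
    exact ht.eventually (hd _)
  filter_upwards [hball, hall] with w hw hsum
  rw [backSum_eq_sum (hN w hw)]
  exact Finset.sum_eq_zero hsum

/-! ### Torsion and non-torsion points modulo the lattice -/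

/-- A lattice is a nonzero, discrete and cocompact subgroup of `ℂ`. -/
theorem IsComplexLattice.exists_addSubgroup {Λ : Set ℂ} (hΛ : IsComplexLattice Λ) :
    ∃ L : AddSubgroup ℂ, (L : Set ℂ) = Λ ∧ (∃ ω ∈ L, ω ≠ 0) ∧
      (∃ ε > 0, ∀ l ∈ L, ‖l‖ < ε → l = 0) ∧ ∃ R : ℝ, ∀ z : ℂ, ∃ l ∈ L, ‖z - l‖ ≤ R := by
  obtain ⟨ω₁, ω₂, hli, rfl⟩ := hΛ
  let b := basisOfLinearIndependentOfCardEqFinrank hli (by simp)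
  have hb : (b : Fin 2 → ℂ) = ![ω₁, ω₂] := coe_basisOfLinearIndependentOfCardEqFinrank _ _
  refine ⟨(Submodule.span ℤ (Set.range b)).toAddSubgroup, ?_, ?_, ?_, ?_⟩
  · ext z
    simp only [hb, Matrix.range_cons, Matrix.range_empty, Set.union_empty, Set.singleton_union,
      SetLike.mem_coe, Submodule.mem_toAddSubgroup, Submodule.mem_span_pair, zsmul_eq_mul,
      Set.mem_ofPred_eq, eq_comm]
  · refine ⟨b 0, Submodule.subset_span ⟨0, rfl⟩, b.ne_zero 0⟩
  · have hd : DiscreteTopology (Submodule.span ℤ (Set.range b)) := inferInstance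
    have h0 := (Metric.isOpen_singleton_iff (x := (0 : Submodule.span ℤ (Set.range b)))).1
      (isOpen_discrete _)
    obtain ⟨ε, hε, h⟩ := h0
    refine ⟨ε, hε, fun l hl hlε => ?_⟩
    have := h ⟨l, hl⟩ (by simpa [Subtype.dist_eq] using hlε)
    simpa using congrArg Subtype.val this
  · refine ⟨∑ i, ‖b i‖, fun z => ⟨ZSpan.floor b z, (ZSpan.floor b z).2, ?_⟩⟩
    exact ZSpan.norm_fract_le (K := ℝ) b z

theorem AddSubgroup.intCast_mul_mem {L : AddSubgroup ℂ} (k : ℤ) {l : ℂ} (hl : l ∈ L) :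
    (k : ℂ) * l ∈ L := by
  simpa using L.zsmul_mem hl k

/-- The support of a periodic divisor is finite modulo the lattice. -/
theorem exists_finite_reps {L : AddSubgroup ℂ} {R : ℝ} (hR : ∀ z : ℂ, ∃ l ∈ L, ‖z - l‖ ≤ R)
    {d : ℂ → ℤ} (hd : DiscretelySupported d) (hper : IsPeriodic L d) :
    ∃ T : Set ℂ, T.Finite ∧ ∀ u, d u ≠ 0 → ∃ s ∈ T, u - s ∈ L := by
  refine ⟨Metric.closedBall 0 R ∩ Function.support d, ?_, fun u hu => ?_⟩
  · by_contra hinf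
    obtain ⟨x, -, hx⟩ := Set.Infinite.exists_accPt_of_subset_isCompact hinf
      (isCompact_closedBall (0 : ℂ) R) Set.inter_subset_left
    exact hd x (hx.mono (Filter.principal_mono.2 Set.inter_subset_right))
  · obtain ⟨l, hl, hlR⟩ := hR u
    refine ⟨u - l, ⟨by simpa using hlR, ?_⟩, by simpa using hl⟩
    have := hper u (-l) (L.neg_mem hl)
    rw [Function.mem_support, sub_eq_add_neg, this]
    exact hu

theorem exponent_unique {p q : ℤ} (hq : 1 < q) (hpq : IsCoprime p q) {m n m' n' : ℕ}
    (h : q ^ m * p ^ n = q ^ m' * p ^ n') : m = m' := by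
  have key : ∀ {m n m' n' : ℕ}, q ^ m * p ^ n = q ^ m' * p ^ n' → m ≤ m' := by
    intro m n m' n' h
    have hdvd : q ^ m ∣ q ^ m' :=
      (IsCoprime.pow (m := m) (n := n') hpq.symm).dvd_of_dvd_mul_right ⟨_, h.symm⟩
    have := Int.le_of_dvd (by positivity) hdvd
    exact (pow_le_pow_iff_right₀ hq).1 this
  exact le_antisymm (key h) (key h.symm)

/-- For `m` large, no support point has a `p`-power multiple congruent to `z / q ^ m`. -/
theorem eventually_avoid {L : AddSubgroup ℂ} {ε : ℝ} (hε : 0 < ε)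
    (hL : ∀ l ∈ L, ‖l‖ < ε → l = 0) {R : ℝ} (hR : ∀ z : ℂ, ∃ l ∈ L, ‖z - l‖ ≤ R)
    {d : ℂ → ℤ} (hd : DiscretelySupported d) (hper : IsPeriodic L d)
    {p q : ℤ} (hq : 1 < q) (hpq : IsCoprime p q) {z : ℂ} (hz : z ≠ 0) :
    ∀ᶠ m : ℕ in Filter.atTop, ∀ n : ℕ, ∀ u : ℂ,
      (p : ℂ) ^ n * u - z / (q : ℂ) ^ m ∈ L → d u = 0 := by
  have hq0 : (q : ℂ) ≠ 0 := by exact_mod_cast (by omega : q ≠ 0)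
  obtain ⟨T, hT, hTd⟩ := exists_finite_reps hR hd hper
  have main : ∀ s : ℂ, ∀ᶠ m : ℕ in Filter.atTop, ∀ n : ℕ,
      (p : ℂ) ^ n * s - z / (q : ℂ) ^ m ∉ L := by
    intro s
    by_cases hs : ∃ k : ℤ, k ≠ 0 ∧ (k : ℂ) * s ∈ L
    · obtain ⟨k, hk, hks⟩ := hs
      have hk' : (k : ℂ) ≠ 0 := by exact_mod_cast hk
      filter_upwards [(tendsto_div_pow hq ‖(k : ℂ) * z‖).eventually_lt_const hε] with m hm n hmem
      have h1 : (k : ℂ) * z / (q : ℂ) ^ m ∈ L := by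
        have h2 := L.sub_mem (AddSubgroup.intCast_mul_mem (p ^ n) hks)
          (AddSubgroup.intCast_mul_mem k hmem)
        convert h2 using 1
        push_cast
        ring
      rw [← norm_div_intCast_pow hq] at hm
      exact div_ne_zero (mul_ne_zero hk' hz) (pow_ne_zero _ hq0) (hL _ h1 hm)
    · push Not at hs
      by_cases hex : ∃ m n : ℕ, (p : ℂ) ^ n * s - z / (q : ℂ) ^ m ∈ L
      · obtain ⟨m', n', h'⟩ := hex
        filter_upwards [Filter.eventually_gt_atTop m'] with m hm n hmem
        have clear : ∀ m n : ℕ, (p : ℂ) ^ n * s - z / (q : ℂ) ^ m ∈ L →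
            (q : ℂ) ^ m * (p : ℂ) ^ n * s - z ∈ L := by
          intro m n h
          convert AddSubgroup.intCast_mul_mem (q ^ m) h using 1
          push_cast
          field_simp
        have h1 := L.sub_mem (clear m n hmem) (clear m' n' h')
        have h2 : ((q ^ m * p ^ n - q ^ m' * p ^ n' : ℤ) : ℂ) * s ∈ L := by
          convert h1 using 1
          push_cast
          ring
        by_cases h3 : q ^ m * p ^ n - q ^ m' * p ^ n' = 0
        · exact hm.ne' (exponent_unique hq hpq (sub_eq_zero.1 h3))
        · exact hs _ h3 h2
      · push Not at hex
        exact Filter.Eventually.of_forall hex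
  have hall : ∀ᶠ m : ℕ in Filter.atTop, ∀ s ∈ T, ∀ n : ℕ,
      (p : ℂ) ^ n * s - z / (q : ℂ) ^ m ∉ L :=
    (Filter.eventually_all_finite hT).2 fun s _ => main s
  filter_upwards [hall] with m hm n u hu
  by_contra hdu
  obtain ⟨s, hsT, hs⟩ := hTd u hdu
  refine hm s hsT n ?_
  convert L.sub_mem hu (AddSubgroup.intCast_mul_mem (p ^ n) hs) using 1
  push_cast
  ring

/-! ### The double backward orbit -/

/-- A discrete Green formula on the rectangle `[0, N] × [0, M]`. -/
theorem green (f g : ℕ → ℕ → ℤ)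
    (h : ∀ n m, f (n + 1) m - f (n + 1) (m + 1) = g n (m + 1) - g (n + 1) (m + 1)) (N M : ℕ) :
    ∑ n ∈ Finset.range N, (f (n + 1) 0 - f (n + 1) M) =
      ∑ m ∈ Finset.range M, (g 0 (m + 1) - g N (m + 1)) := by
  calc _ = ∑ n ∈ Finset.range N, ∑ m ∈ Finset.range M, (f (n + 1) m - f (n + 1) (m + 1)) :=
        Finset.sum_congr rfl fun n _ => (Finset.sum_range_sub' (f (n + 1)) M).symm
    _ = ∑ m ∈ Finset.range M, ∑ n ∈ Finset.range N, (g n (m + 1) - g (n + 1) (m + 1)) := by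
        rw [Finset.sum_comm]
        simp only [h]
    _ = _ := Finset.sum_congr rfl fun m _ => Finset.sum_range_sub' (fun n => g n (m + 1)) N

/-- `u` is a point at position `(n, m)` of the double backward orbit of `z` modulo the lattice
whose `p`-branch is `z / p ^ n` and whose `q`-branch is `(z + l) / q ^ m`. -/
def IsBranchPoint (p q : ℤ) (z l : ℂ) (n m : ℕ) (u : ℂ) : Prop :=
  ∃ c : ℤ, p ^ n ∣ c ∧ q ^ m ∣ c - 1 ∧ (p : ℂ) ^ n * (q : ℂ) ^ m * u = z + c * l

namespace IsBranchPoint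

variable {p q : ℤ} {z l : ℂ} {n m : ℕ} {u v : ℂ}

theorem exists_point (hp : 1 < p) (hq : 1 < q) (hpq : IsCoprime p q) (z l : ℂ) (n m : ℕ) :
    ∃ u, IsBranchPoint p q z l n m u := by
  have hp0 : (p : ℂ) ≠ 0 := by exact_mod_cast (by omega : p ≠ 0)
  have hq0 : (q : ℂ) ≠ 0 := by exact_mod_cast (by omega : q ≠ 0)
  obtain ⟨a, b, hab⟩ := IsCoprime.pow (m := n) (n := m) hpq
  refine ⟨(z + (a * p ^ n : ℤ) * l) / ((p : ℂ) ^ n * (q : ℂ) ^ m), a * p ^ n,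
    Dvd.intro_left a rfl, ⟨-b, by linear_combination hab⟩, ?_⟩
  field_simp

theorem sub_mem (hp : 1 < p) (hq : 1 < q) (hpq : IsCoprime p q) {L : AddSubgroup ℂ} (hl : l ∈ L)
    (hu : IsBranchPoint p q z l n m u) (hv : IsBranchPoint p q z l n m v) : u - v ∈ L := by
  have hp0 : (p : ℂ) ≠ 0 := by exact_mod_cast (by omega : p ≠ 0)
  have hq0 : (q : ℂ) ≠ 0 := by exact_mod_cast (by omega : q ≠ 0)
  obtain ⟨c, hc1, hc2, hc⟩ := hu
  obtain ⟨c', hc1', hc2', hc'⟩ := hv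
  have hdvd : p ^ n * q ^ m ∣ c - c' :=
    (IsCoprime.pow hpq).mul_dvd (dvd_sub hc1 hc1') (by simpa using dvd_sub hc2 hc2')
  obtain ⟨k, hk⟩ := hdvd
  have hk' : (c : ℂ) - c' = (p : ℂ) ^ n * (q : ℂ) ^ m * k := by exact_mod_cast hk
  have : u - v = k * l := by
    have h0 : (p : ℂ) ^ n * (q : ℂ) ^ m ≠ 0 :=
      mul_ne_zero (pow_ne_zero _ hp0) (pow_ne_zero _ hq0)
    apply mul_left_cancel₀ h0
    linear_combination hc - hc' + l * hk'
  rw [this]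
  exact AddSubgroup.intCast_mul_mem k hl

theorem p_mul (hu : IsBranchPoint p q z l (n + 1) m u) : IsBranchPoint p q z l n m (p * u) := by
  obtain ⟨c, hc1, hc2, hc⟩ := hu
  exact ⟨c, (pow_dvd_pow p n.le_succ).trans hc1, hc2, by rw [← hc]; ring⟩

theorem q_mul (hu : IsBranchPoint p q z l n (m + 1) u) : IsBranchPoint p q z l n m (q * u) := by
  obtain ⟨c, hc1, hc2, hc⟩ := hu
  exact ⟨c, hc1, (pow_dvd_pow q m.le_succ).trans hc2, by rw [← hc]; ring⟩

theorem p_pow_mul (hu : IsBranchPoint p q z l n m u) :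
    IsBranchPoint p q z l 0 m ((p : ℂ) ^ n * u) := by
  obtain ⟨c, -, hc2, hc⟩ := hu
  exact ⟨c, by simp, hc2, by rw [← hc]; ring⟩

theorem q_pow_mul (hu : IsBranchPoint p q z l n m u) :
    IsBranchPoint p q z l n 0 ((q : ℂ) ^ m * u) := by
  obtain ⟨c, hc1, -, hc⟩ := hu
  exact ⟨c, hc1, by simp, by rw [← hc]; ring⟩

theorem p_branch (hp : 1 < p) : IsBranchPoint p q z l n 0 (z / (p : ℂ) ^ n) := by
  have hp0 : (p : ℂ) ≠ 0 := by exact_mod_cast (by omega : p ≠ 0)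
  exact ⟨0, by simp, by simp, by field_simp; simp⟩

theorem q_branch (hq : 1 < q) : IsBranchPoint p q z l 0 m ((z + l) / (q : ℂ) ^ m) := by
  have hq0 : (q : ℂ) ≠ 0 := by exact_mod_cast (by omega : q ≠ 0)
  exact ⟨1, by simp, by simp, by field_simp; simp⟩

end IsBranchPoint

theorem IsPeriodic.eq_of_sub_mem {L : AddSubgroup ℂ} {d : ℂ → ℤ} (hper : IsPeriodic L d)
    {u v : ℂ} (h : u - v ∈ L) : d u = d v := by
  simpa using hper v (u - v) h

/-- The `p`-sum of `dσ` and the `q`-sum of `dτ` agree at lattice-equivalent nonzero points. -/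
theorem backSum_eq {L : AddSubgroup ℂ} {ε : ℝ} (hε : 0 < ε)
    (hL : ∀ l ∈ L, ‖l‖ < ε → l = 0) {R : ℝ} (hR : ∀ z : ℂ, ∃ l ∈ L, ‖z - l‖ ≤ R)
    {p q : ℤ} (hp : 1 < p) (hq : 1 < q) (hpq : IsCoprime p q) {dσ dτ : ℂ → ℤ}
    (hdσ : DiscretelySupported dσ) (hdτ : DiscretelySupported dτ)
    (hdσper : IsPeriodic L dσ) (hdτper : IsPeriodic L dτ) (hσ0 : dσ 0 = 0) (hτ0 : dτ 0 = 0)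
    (hcoc : ∀ z : ℂ, dτ ((p : ℂ) * z) - dτ z = dσ ((q : ℂ) * z) - dσ z)
    {z l : ℂ} (hl : l ∈ L) (hz : z ≠ 0) (hzl : z + l ≠ 0) :
    backSum dσ p z = backSum dτ q (z + l) := by
  choose u hu using IsBranchPoint.exists_point hp hq hpq z l
  have hgreen := green (fun n m => dσ (u n m)) (fun n m => dτ (u n m)) fun n m => by
    have h1 := hdσper.eq_of_sub_mem ((hu (n + 1) (m + 1)).q_mul.sub_mem hp hq hpq hl (hu (n + 1) m))
    have h2 := hdτper.eq_of_sub_mem ((hu (n + 1) (m + 1)).p_mul.sub_mem hp hq hpq hl (hu n (m + 1)))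
    have h3 := hcoc (u (n + 1) (m + 1))
    linarith
  obtain ⟨δ, hδ, hσδ⟩ := exists_ball_eq_zero hdσ hσ0
  obtain ⟨δ', hδ', hτδ⟩ := exists_ball_eq_zero hdτ hτ0
  obtain ⟨N₁, hN₁⟩ := exists_backSum_trunc hδ hσδ hp ‖z‖
  obtain ⟨M₁, hM₁⟩ := exists_backSum_trunc hδ' hτδ hq ‖z + l‖
  obtain ⟨M, hM, hMM₁⟩ := ((eventually_avoid hε hL hR hdσ hdσper hq hpq hzl).and
    (Filter.eventually_ge_atTop M₁)).exists
  obtain ⟨N, hN, hNN₁⟩ := ((eventually_avoid hε hL hR hdτ hdτper hp hpq.symm hz).and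
    (Filter.eventually_ge_atTop N₁)).exists
  rw [backSum_eq_sum fun n hn => hN₁ z le_rfl n (hNN₁.trans hn),
    backSum_eq_sum fun m hm => hM₁ (z + l) le_rfl m (hMM₁.trans hm)]
  convert hgreen N M using 2 with n _ m _
  · rw [hM (n + 1) (u (n + 1) M) ((hu _ _).p_pow_mul.sub_mem hp hq hpq hl (.q_branch hq)),
      sub_zero]
    exact hdσper.eq_of_sub_mem ((IsBranchPoint.p_branch hp).sub_mem hp hq hpq hl (hu _ _))
  · rw [hN (m + 1) (u N (m + 1)) ((hu _ _).q_pow_mul.sub_mem hp hq hpq hl (.p_branch hp)),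
      sub_zero]
    exact hdτper.eq_of_sub_mem ((IsBranchPoint.q_branch hq).sub_mem hp hq hpq hl (hu _ _))

/-! ### The splitting -/

/-- **Splitting of special divisor cocycles.** Let `p, q > 1` be relatively prime
integers and `d_σ, d_τ : ℂ → ℤ` discretely supported `Λ`-periodic functions vanishing
at `0` and satisfying `d_τ(pz) - d_τ(z) = d_σ(qz) - d_σ(z)`.  Then there is a discretely
supported `Λ`-periodic `e : ℂ → ℤ` with `d_σ(z) = e(pz) - e(z)` and
`d_τ(z) = e(qz) - e(z)`. -/
theorem divisor_cocycle_splits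
    (Λ : Set ℂ) (hΛ : IsComplexLattice Λ)
    (p q : ℤ) (hp : 1 < p) (hq : 1 < q) (hpq : IsCoprime p q)
    (dσ dτ : ℂ → ℤ)
    (hdσ : DiscretelySupported dσ) (hdτ : DiscretelySupported dτ)
    (hdσper : IsPeriodic Λ dσ) (hdτper : IsPeriodic Λ dτ)
    (hσ0 : dσ 0 = 0) (hτ0 : dτ 0 = 0)
    (hcoc : ∀ z : ℂ, dτ ((p : ℂ) * z) - dτ z = dσ ((q : ℂ) * z) - dσ z) :
    ∃ e : ℂ → ℤ, DiscretelySupported e ∧ IsPeriodic Λ e ∧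
      (∀ z : ℂ, dσ z = e ((p : ℂ) * z) - e z) ∧
      (∀ z : ℂ, dτ z = e ((q : ℂ) * z) - e z) := by
  classical
  obtain ⟨L, rfl, ⟨ω, hω, hω0⟩, ⟨ε, hε, hL⟩, ⟨R, hR⟩⟩ := hΛ.exists_addSubgroup
  have hp0 : (p : ℂ) ≠ 0 := by exact_mod_cast (by omega : p ≠ 0)
  have hq0 : (q : ℂ) ≠ 0 := by exact_mod_cast (by omega : q ≠ 0)
  have key : ∀ {z l : ℂ}, l ∈ L → z ≠ 0 → z + l ≠ 0 →
      backSum dσ p z = backSum dτ q (z + l) :=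
    backSum_eq hε hL hR hp hq hpq hdσ hdτ hdσper hdτper hσ0 hτ0 hcoc
  have hστ : ∀ {z : ℂ}, z ≠ 0 → backSum dσ p z = backSum dτ q z := fun {z} hz => by
    simpa using key (z := z) L.zero_mem hz (by simpa using hz)
  have hper : ∀ {z w : ℂ}, w - z ∈ L → z ≠ 0 → w ≠ 0 →
      backSum dσ p w = backSum dσ p z := fun {z w} h hz hw => by
    rw [hστ hw, key h hz (by simpa using hw)]
    simp
  -- `backSum dσ p 0 = 0`, so the value at `0` has to be replaced by the one on `Λ \ {0}`.
  refine ⟨fun z => if z = 0 then backSum dσ p ω else backSum dσ p z, ?_, ?_, ?_, ?_⟩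
  · have h := (discretelySupported_iff _).1 (backSum_discrete hdσ hσ0 hp)
    refine (discretelySupported_iff _).2 fun z => ?_
    have hne : ∀ᶠ w in nhdsWithin z {z}ᶜ, w ≠ 0 := by
      by_cases hz : z = 0
      · subst hz
        exact eventually_mem_nhdsWithin
      · exact nhdsWithin_le_nhds (isOpen_ne.mem_nhds hz)
    filter_upwards [h z, hne] with w hw hw0
    simp [hw0, hw]
  · intro z l hl
    have hl' : l ∈ L := hl
    by_cases hz : z = 0
    · subst hz
      by_cases hl0 : l = 0
      · simp [hl0]
      · simpa [hl0] using hper (L.sub_mem hl' hω) hω0 hl0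
    · by_cases hzl : z + l = 0
      · have hzL : z ∈ L := by
          rw [eq_neg_of_add_eq_zero_left hzl]
          exact L.neg_mem hl'
        simpa [hz, hzl] using hper (L.sub_mem hω hzL) hz hω0
      · simpa [hz, hzl] using hper (by simpa using hl') hz hzl
  · intro z
    by_cases hz : z = 0
    · simp [hz, hσ0]
    · simp [hz, hp0, backSum_mul hdσ hσ0 hp]
  · intro z
    by_cases hz : z = 0
    · simp [hz, hτ0]
    · simp [hz, hq0, hστ hz, hστ (mul_ne_zero hq0 hz), backSum_mul hdτ hτ0 hq]
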